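/- (Generalized hypothesis testing, Section 6) Theorem 2.1 remains valid when the alternative hypotheses are arbitrary nonnegative σ-finite measures: for each n ≥ 1 let P_n be a probability measure and G_n a σ-finite nonnegative measure on a measurable space Ω_n, define for a measurable acceptance region A_n ⊆ Ω_n the quantities μ_n = P_n(Ω_n \ A_n) and λ_n = G_n(A_n), set Z_n = (1/n) log (dP_n/dG_n) (Radon–Nikodym derivative, equal to +∞ on the P_n-singular part), and define η(R) = liminf_{n→∞} −(1/n) log P_n{Z_n ≤ R}. Then for every r > 0, the supremum B_e(r) of all real E for which there exist measurable sets A_n with liminf_{n→∞} −(1/n) log μ_n ≥ r and liminf_{n→∞} −(1/n) log λ_n ≥ E satisfies B_e(r) = inf{ R + η(R) : R ∈ ℝ, η(R) < r }, where the infimum of the empty set is +∞. -/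

import Mathlib

open MeasureTheory Filter
open scoped ENNReal NNReal

/-- The exponent `-(1/n) log p` of a nonneg extended real `p`, valued in `EReal`,
with the conventions `-log 0 = +∞` and `-log ∞ = -∞`. -/
noncomputable def expRate (n : ℕ) (p : ℝ≥0∞) : EReal :=
  (((n : ℝ)⁻¹ : ℝ) : EReal) * (-(ENNReal.log p))

/-- The likelihood ratio `dμ/dν`, defined to be `+∞` on the part of the space where
`μ` is singular with respect to `ν` (μ-a.e.). -/
noncomputable def lratio {Ω : Type*} [MeasurableSpace Ω] (μ ν : Measure Ω) (x : Ω) : ℝ≥0∞ :=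
  μ.rnDeriv (μ + ν) x / ν.rnDeriv (μ + ν) x

section Setup

variable {Ω : ℕ → Type*} [∀ n, MeasurableSpace (Ω n)]

/-- `η(R) = liminf_n -(1/n) log P_n{ (1/n) log dP_n/dQ_n ≤ R }`. -/
noncomputable def eta (P Q : ∀ n, Measure (Ω n)) (R : ℝ) : EReal :=
  Filter.atTop.liminf fun n =>
    expRate n ((P n) {x | lratio (P n) (Q n) x ≤ ENNReal.ofReal (Real.exp (n * R))})

/-- `E` is `r`-achievable: there are measurable acceptance regions `A n` with
`liminf -(1/n) log μ_n ≥ r` and `liminf -(1/n) log λ_n ≥ E`. -/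
def rAchievable (P Q : ∀ n, Measure (Ω n)) (r E : ℝ) : Prop :=
  ∃ A : ∀ n, Set (Ω n), (∀ n, MeasurableSet (A n)) ∧
    (r : EReal) ≤ Filter.atTop.liminf (fun n => expRate n ((P n) (A n)ᶜ)) ∧
    (E : EReal) ≤ Filter.atTop.liminf (fun n => expRate n ((Q n) (A n)))

/-- The optimal error exponent `B_e(r)`: the supremum of all `r`-achievable `E`. -/
noncomputable def Be (P Q : ∀ n, Measure (Ω n)) (r : ℝ) : EReal :=
  sSup {x : EReal | ∃ E : ℝ, rAchievable P Q r E ∧ x = (E : EReal)}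

end Setup

/-!
Put `s(R) = limsup (1/n) log P_n{Z_n ≤ R} = -η(R)` and `g(R) = limsup (1/n) log G_n{Z_n > R}`.
Since `dP_n/dG_n` is at most `e^{nR}` on `{Z_n ≤ R}` and larger than `e^{nR}` on `{Z_n > R}`,
comparing the two measures gives:

* for every region `A_n`, `P_n{Z_n ≤ R} ≤ e^{nR} G_n(A_n) + P_n(A_nᶜ)`, so if
  `P_n(A_nᶜ)` has exponent at least `r > η(R)`, then `G_n(A_n)` has exponent at most `R + η(R)`;
* slicing `{Z_n > R'}` at level `R`, `g(R') ≤ max (s(R) - R') (g(R))`.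

Let `δ > 0` and suppose `R + η(R) ≥ E + δ` whenever `η(R) < r`. By the second bound with
`R' = R - δ`, the inequality `g(R) ≤ -E` passes from `R` to `R - δ` as long as `η(R) < r`. It holds
for large `R`, because `e^{nR} G_n{Z_n > R} ≤ P_n(Ω_n)`, while `η(R) < r` forces `R ≥ E + δ - r`.
So the descent stops, at a threshold with `g(R) ≤ -E` and `η(R) ≥ r`.
-/

section LikelihoodRatio

variable {X : Type*} [MeasurableSpace X] {μ ν : Measure X}

lemma measurable_lratio : Measurable (lratio μ ν) :=
  (Measure.measurable_rnDeriv _ _).div (Measure.measurable_rnDeriv _ _)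

variable [SigmaFinite μ] [SigmaFinite ν] {c : ℝ≥0∞} {B : Set X}

variable (μ ν B) in
lemma setLIntegral_rnDeriv_add_right :
    ∫⁻ x in B, μ.rnDeriv (μ + ν) x ∂(μ + ν) = μ B :=
  Measure.setLIntegral_rnDeriv (Measure.AbsolutelyContinuous.rfl.add_right ν) B

variable (μ ν B) in
lemma setLIntegral_rnDeriv_add_left :
    ∫⁻ x in B, ν.rnDeriv (μ + ν) x ∂(μ + ν) = ν B := by
  rw [add_comm, setLIntegral_rnDeriv_add_right]

lemma measure_le_mul_of_lratio_le (hc : c ≠ ∞) (h : ∀ x ∈ B, lratio μ ν x ≤ c) :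
    μ B ≤ c * ν B := by
  have hν : Measurable (ν.rnDeriv (μ + ν)) := Measure.measurable_rnDeriv _ _
  rw [← setLIntegral_rnDeriv_add_right μ ν, ← setLIntegral_rnDeriv_add_left μ ν,
    ← lintegral_const_mul _ hν]
  refine setLIntegral_mono_ae (hν.const_mul c).aemeasurable ?_
  filter_upwards [ν.rnDeriv_ne_top (μ + ν)] with x hx hxB
  exact (ENNReal.div_le_iff_le_mul (.inr hc) (.inl hx)).1 (h x hxB)

lemma mul_measure_le_of_le_lratio (h : ∀ x ∈ B, c ≤ lratio μ ν x) : c * ν B ≤ μ B := by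
  rw [← setLIntegral_rnDeriv_add_right μ ν, ← setLIntegral_rnDeriv_add_left μ ν,
    ← lintegral_const_mul _ (Measure.measurable_rnDeriv _ _)]
  exact setLIntegral_mono (Measure.measurable_rnDeriv _ _)
    fun x hx ↦ ENNReal.mul_le_of_le_div (h x hx)

end LikelihoodRatio

open ExpGrowth

section ExponentialGrowth

variable (u : ℕ → ℝ≥0∞)

lemma liminf_expRate : atTop.liminf (fun n ↦ expRate n (u n)) = -expGrowthSup u := by
  rw [expGrowthSup, ← EReal.liminf_neg]
  refine liminf_congr (Eventually.of_forall fun n ↦ ?_)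
  rw [expRate, Pi.neg_apply, EReal.div_eq_inv_mul, mul_comm, EReal.neg_mul, mul_comm]
  rfl

lemma expGrowthSup_ofReal_exp_mul (a : ℝ) :
    expGrowthSup (fun n ↦ ENNReal.ofReal (Real.exp (n * a)) * u n) = a + expGrowthSup u := by
  have hexp : (fun n : ℕ ↦ ENNReal.ofReal (Real.exp (n * a))) =
      fun n : ℕ ↦ EReal.exp ((a : EReal) * n) := by
    funext n
    rw [← EReal.exp_coe, mul_comm, EReal.coe_mul]
    rfl
  have hinf := expGrowthInf_exp (a := (a : EReal))
  have hsup := expGrowthSup_exp (a := (a : EReal))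
  rw [← hexp] at hinf hsup
  refine le_antisymm ?_ ?_
  · rw [← hsup]
    refine expGrowthSup_mul_le (.inl ?_) (.inl ?_) <;> rw [hsup]
    exacts [EReal.coe_ne_bot a, EReal.coe_ne_top a]
  · rw [← hinf]
    exact le_expGrowthSup_mul'

end ExponentialGrowth

section HypothesisTesting

variable {Ω : ℕ → Type*} [∀ n, MeasurableSpace (Ω n)] {P G : ∀ n, Measure (Ω n)} {r E : ℝ}

/-- The Neyman–Pearson acceptance region `{Z_n > R}` of the likelihood ratio test with threshold
`R`, written without logarithms as `{dP_n/dG_n > exp (n R)}`. -/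
def neymanPearsonRegion (P G : ∀ n, Measure (Ω n)) (R : ℝ) (n : ℕ) : Set (Ω n) :=
  {x | ENNReal.ofReal (Real.exp (n * R)) < lratio (P n) (G n) x}

lemma measurableSet_neymanPearsonRegion (R : ℝ) (n : ℕ) :
    MeasurableSet (neymanPearsonRegion P G R n) :=
  measurableSet_lt measurable_const measurable_lratio

lemma rAchievable_iff_expGrowthSup_le :
    rAchievable P G r E ↔ ∃ A : ∀ n, Set (Ω n), (∀ n, MeasurableSet (A n)) ∧
      expGrowthSup (fun n ↦ P n (A n)ᶜ) ≤ -r ∧ expGrowthSup (fun n ↦ G n (A n)) ≤ -E := by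
  simp only [rAchievable, liminf_expRate, EReal.le_neg]

lemma eta_eq_neg_expGrowthSup (R : ℝ) :
    eta P G R = -expGrowthSup (fun n ↦ P n (neymanPearsonRegion P G R n)ᶜ) := by
  simp only [eta, liminf_expRate, neymanPearsonRegion, Set.compl_ofPred, not_lt]

lemma rAchievable_of_neymanPearsonRegion {R : ℝ} (hη : (r : EReal) ≤ eta P G R)
    (hG : expGrowthSup (fun n ↦ G n (neymanPearsonRegion P G R n)) ≤ -E) :
    rAchievable P G r E := by
  rw [eta_eq_neg_expGrowthSup, EReal.le_neg] at hη
  exact rAchievable_iff_expGrowthSup_le.2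
    ⟨neymanPearsonRegion P G R, measurableSet_neymanPearsonRegion R, hη, hG⟩

variable [∀ n, SigmaFinite (P n)] [∀ n, SigmaFinite (G n)]

lemma neg_eta_le_max (A : ∀ n, Set (Ω n)) (R : ℝ) :
    -eta P G R ≤
      max (R + expGrowthSup (fun n ↦ G n (A n))) (expGrowthSup (fun n ↦ P n (A n)ᶜ)) := by
  rw [eta_eq_neg_expGrowthSup, neg_neg, ← expGrowthSup_ofReal_exp_mul, ← expGrowthSup_add]
  refine expGrowthSup_monotone fun n ↦ ?_
  set S := (neymanPearsonRegion P G R n)ᶜ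
  calc P n S ≤ P n (S ∩ A n) + P n (S \ A n) := measure_le_inter_add_sdiff _ _ _
    _ ≤ ENNReal.ofReal (Real.exp (n * R)) * G n (S ∩ A n) + P n (S \ A n) := by
      gcongr
      exact measure_le_mul_of_lratio_le ENNReal.ofReal_ne_top fun x hx ↦ not_lt.1 hx.1
    _ ≤ ENNReal.ofReal (Real.exp (n * R)) * G n (A n) + P n (A n)ᶜ := by
      gcongr
      exacts [Set.inter_subset_right, fun x hx ↦ hx.2]

lemma add_expGrowthSup_le_of_subset_neymanPearsonRegion {B : ∀ n, Set (Ω n)} {R : ℝ}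
    (hB : ∀ n, B n ⊆ neymanPearsonRegion P G R n) :
    R + expGrowthSup (fun n ↦ G n (B n)) ≤ expGrowthSup (fun n ↦ P n (B n)) := by
  rw [← expGrowthSup_ofReal_exp_mul]
  exact expGrowthSup_monotone fun n ↦ mul_measure_le_of_le_lratio fun x hx ↦ (hB n hx).le

lemma expGrowthSup_neymanPearsonRegion_le_max (R R' : ℝ) :
    expGrowthSup (fun n ↦ G n (neymanPearsonRegion P G R' n)) ≤
      max (-eta P G R - R') (expGrowthSup fun n ↦ G n (neymanPearsonRegion P G R n)) := by
  let slice (n : ℕ) := neymanPearsonRegion P G R' n \ neymanPearsonRegion P G R n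
  have hslice : expGrowthSup (fun n ↦ G n (slice n)) ≤ -eta P G R - R' := by
    rw [EReal.le_sub_iff_add_le (.inl (EReal.coe_ne_bot R')) (.inl (EReal.coe_ne_top R')),
      add_comm, eta_eq_neg_expGrowthSup, neg_neg]
    exact (add_expGrowthSup_le_of_subset_neymanPearsonRegion fun n ↦ Set.sdiff_subset).trans
      (expGrowthSup_monotone fun n ↦ measure_mono fun x hx ↦ hx.2)
  refine le_trans ?_ (max_le_max_right _ hslice)
  rw [← expGrowthSup_add]
  refine expGrowthSup_monotone fun n ↦ (measure_mono ?_).trans (measure_union_le _ _)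
  exact Set.subset_sdiff_union _ _

theorem rAchievable.le_add_eta {R : ℝ} (hE : rAchievable P G r E) (hR : eta P G R < r) :
    (E : EReal) ≤ R + eta P G R := by
  obtain ⟨A, -, hPA, hGA⟩ := rAchievable_iff_expGrowthSup_le.1 hE
  have hη : -eta P G R ≤ R + expGrowthSup (fun n ↦ G n (A n)) :=
    (le_max_iff.1 (neg_eta_le_max A R)).resolve_right
      (not_le.2 (hPA.trans_lt (EReal.neg_lt_neg_iff.2 hR)))
  have hneg : -eta P G R ≤ ((R - E : ℝ) : EReal) := by
    rw [EReal.coe_sub, sub_eq_add_neg]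
    exact hη.trans (by gcongr)
  calc (E : EReal) = R + -((R - E : ℝ) : EReal) := by norm_cast; ring
    _ ≤ R + eta P G R := by gcongr; exact EReal.neg_le.1 hneg

lemma exists_expGrowthSup_neymanPearsonRegion_le
    (hP : expGrowthSup (fun n ↦ P n Set.univ) < ⊤) (e : ℝ) :
    ∃ R : ℝ, expGrowthSup (fun n ↦ G n (neymanPearsonRegion P G R n)) ≤ e := by
  obtain ⟨a, ha, -⟩ := EReal.lt_iff_exists_real_btwn.1 hP
  refine ⟨a - e, ?_⟩
  calc expGrowthSup (fun n ↦ G n (neymanPearsonRegion P G (a - e) n))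
      ≤ a - ((a - e : ℝ) : EReal) := by
        rw [EReal.le_sub_iff_add_le (.inl (EReal.coe_ne_bot _)) (.inl (EReal.coe_ne_top _)),
          add_comm]
        exact (add_expGrowthSup_le_of_subset_neymanPearsonRegion fun n ↦ subset_rfl).trans
          ((expGrowthSup_monotone fun n ↦ measure_mono (Set.subset_univ _)).trans ha.le)
    _ = e := by norm_cast; ring

lemma expGrowthSup_neymanPearsonRegion_sub_le {R E' : ℝ}
    (hη : (E' : EReal) ≤ R + eta P G R)
    (hR : expGrowthSup (fun n ↦ G n (neymanPearsonRegion P G R n)) ≤ -E) :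
    expGrowthSup (fun n ↦ G n (neymanPearsonRegion P G (R - (E' - E)) n)) ≤ -E := by
  refine (expGrowthSup_neymanPearsonRegion_le_max R _).trans (max_le ?_ hR)
  have hneg : -eta P G R ≤ ((R - E' : ℝ) : EReal) := by
    rw [EReal.neg_le, ← EReal.coe_neg, neg_sub, EReal.coe_sub]
    exact EReal.sub_le_of_le_add' hη
  calc -eta P G R - ((R - (E' - E) : ℝ) : EReal)
      ≤ ((R - E' : ℝ) : EReal) - ((R - (E' - E) : ℝ) : EReal) := EReal.sub_le_sub hneg le_rfl
    _ = -E := by norm_cast; ring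

lemma exists_le_eta_and_expGrowthSup_neymanPearsonRegion_le
    (hP : expGrowthSup (fun n ↦ P n Set.univ) < ⊤) {E' : ℝ} (hE : E < E')
    (hη : ∀ R : ℝ, eta P G R < r → (E' : EReal) ≤ R + eta P G R) :
    ∃ R : ℝ, (r : EReal) ≤ eta P G R ∧
      expGrowthSup (fun n ↦ G n (neymanPearsonRegion P G R n)) ≤ -E := by
  by_contra! hlt
  let K : Set ℝ := {R | expGrowthSup (fun n ↦ G n (neymanPearsonRegion P G R n)) ≤ -E}
  have hηK {R : ℝ} (hR : R ∈ K) : eta P G R < r := not_le.1 fun h ↦ (hlt R h).not_ge hR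
  have hK : K.Nonempty := exists_expGrowthSup_neymanPearsonRegion_le hP (-E)
  have hbdd : BddBelow K := by
    refine ⟨E' - r, fun R hR ↦ ?_⟩
    have hle : (E' : EReal) ≤ R + r := (hη R (hηK hR)).trans (by gcongr; exact (hηK hR).le)
    norm_cast at hle
    linarith
  obtain ⟨R, hR, hR_lt⟩ := exists_lt_of_csInf_lt hK (lt_add_of_pos_right (sInf K) (sub_pos.2 hE))
  have hle : sInf K ≤ R - (E' - E) :=
    csInf_le hbdd (expGrowthSup_neymanPearsonRegion_sub_le (hη R (hηK hR)) hR)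
  linarith

end HypothesisTesting

theorem han_generalized_theorem_2_1_general {Ω : ℕ → Type*} [∀ n, MeasurableSpace (Ω n)]
    (P G : ∀ n, Measure (Ω n)) [∀ n, SigmaFinite (P n)] [∀ n, SigmaFinite (G n)]
    (hP : expGrowthSup (fun n ↦ P n Set.univ) < ⊤) (r : ℝ) :
    Be P G r =
      sInf {x : EReal | ∃ R : ℝ, eta P G R < (r : EReal) ∧ x = (R : EReal) + eta P G R} := by
  refine le_antisymm ?converse (le_of_forall_lt fun y hy ↦ ?direct)
  case converse =>
    refine sSup_le ?_
    rintro _ ⟨E, hE, rfl⟩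
    refine le_sInf ?_
    rintro _ ⟨R, hR, rfl⟩
    exact hE.le_add_eta hR
  case direct =>
    obtain ⟨E, hyE, hE⟩ := EReal.lt_iff_exists_real_btwn.1 hy
    obtain ⟨E', hEE', hE'⟩ := EReal.lt_iff_exists_real_btwn.1 hE
    obtain ⟨R, hη, hG⟩ := exists_le_eta_and_expGrowthSup_neymanPearsonRegion_le hP
      (EReal.coe_lt_coe_iff.1 hEE') fun R hR ↦ hE'.le.trans (sInf_le ⟨R, hR, rfl⟩)
    exact hyE.trans_le (le_sSup ⟨E, rAchievable_of_neymanPearsonRegion hη hG, rfl⟩)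

/-- Generalized hypothesis testing (Section 6): Theorem 2.1 remains valid when the
alternative hypotheses are arbitrary σ-finite nonnegative measures `G n`. -/
theorem han_generalized_theorem_2_1 {Ω : ℕ → Type*} [∀ n, MeasurableSpace (Ω n)]
    (P G : ∀ n, Measure (Ω n)) [∀ n, IsProbabilityMeasure (P n)]
    [∀ n, SigmaFinite (G n)] (r : ℝ) (hr : 0 < r) :
    Be P G r =
      sInf {x : EReal | ∃ R : ℝ, eta P G R < (r : EReal) ∧ x = (R : EReal) + eta P G R} := by
  exact han_generalized_theorem_2_1_general P G (by simp [expGrowthSup_const]) r
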